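/- Fix integers N ≥ 1 and L ≥ 1. Define h : [0,N] → ℝ by h(0) = min(L,N) and h(x) = ((N−x)/x) · (1 − (1 − x/N)^L) for x ∈ (0,N], and define its lower convex envelope B : [0,N] → ℝ by B(R) = inf{ θ·h(x₁) + (1−θ)·h(x₂) : θ ∈ [0,1], x₁, x₂ ∈ [0,N], θ·x₁ + (1−θ)·x₂ = R }. Then for every R ∈ [0,N), B(R) ≤ 4.7 · max_{1 ≤ ℓ ≤ min(L,⌈N/4⌉)} (1−(1−1/N)^ℓ) · max(N − ℓR, 0). -/

import Mathlib

/-!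
Put `r = R / N`. For `ℓ ≤ ⌈N/4⌉` the second-order Bonferroni inequality gives
`1 - (1 - 1/N) ^ ℓ ≥ (7/8) (ℓ/N)`, so the `ℓ`-th converse term is at least `(7/8) ℓ (1 - ℓ r)`.
It is therefore enough to bound the envelope by `4 ℓ (1 - ℓ r)` for some admissible `ℓ`, which
yields the constant `32/7 < 4.7`. Write `M = min(L, ⌈N/4⌉)` for the largest admissible `ℓ`.

* If `r > 1 / (2M + 1)`, the rate is at most `1/r - 1`, and the integer `ℓ` nearest to the
  maximiser `1 / (2r)` of the concave quadratic `ℓ (1 - ℓ r)` is admissible.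
* If `r ≤ 1 / (2M + 1)` and `M = L`, the rate is at most `L (1 - r)`, and `ℓ = L` suffices.
* If `r ≤ 1 / (2M + 1)` and `M = ⌈N/4⌉`, memory sharing between the cache sizes `0` and
  `N / (2M + 1)` replaces the rate by a chord, and `ℓ = M` suffices.
-/

open Set

namespace CodedCaching

section Bonferroni

theorem one_sub_pow_le_one_sub_mul_add_choose_two_mul_sq {K : Type*} [CommRing K] [LinearOrder K]
    [IsStrictOrderedRing K] {x : K} (hx₀ : 0 ≤ x) (hx₁ : x ≤ 1) (n : ℕ) :
    (1 - x) ^ n ≤ 1 - n * x + n.choose 2 * x ^ 2 := by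
  induction n with
  | zero => simp
  | succ n ih =>
    have hcubic : 0 ≤ (n.choose 2 : K) * x ^ 3 := by positivity
    calc (1 - x) ^ (n + 1) ≤ (1 - n * x + n.choose 2 * x ^ 2) * (1 - x) := by
          rw [pow_succ]
          exact mul_le_mul_of_nonneg_right ih (sub_nonneg.2 hx₁)
      _ = 1 - (n + 1) * x + (n + n.choose 2) * x ^ 2 - n.choose 2 * x ^ 3 := by ring
      _ ≤ 1 - (n + 1) * x + (n + n.choose 2) * x ^ 2 := sub_le_self _ hcubic
      _ = 1 - (n + 1 : ℕ) * x + (n + 1).choose 2 * x ^ 2 := by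
          simp [Nat.choose_succ_succ' n 1]

theorem mul_one_sub_half_le_one_sub_one_sub_pow {K : Type*} [Field K] [LinearOrder K]
    [IsStrictOrderedRing K] {x : K} (hx₀ : 0 ≤ x) (hx₁ : x ≤ 1) (n : ℕ) :
    n * x * (1 - (n - 1) * x / 2) ≤ 1 - (1 - x) ^ n := by
  have h := one_sub_pow_le_one_sub_mul_add_choose_two_mul_sq hx₀ hx₁ n
  rw [Nat.cast_choose_two] at h
  linarith

end Bonferroni

section Converse

/-- The `ℓ`-th term of the converse lower bound on the update rate, for `N` files and cache
rate `R`. -/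
noncomputable def converseTerm (N R : ℝ) (ℓ : ℕ) : ℝ :=
  (1 - (1 - 1 / N) ^ ℓ) * max (N - ℓ * R) 0

variable {N R : ℝ} {ℓ : ℕ}

theorem converseTerm_nonneg (hN : 1 ≤ N) : 0 ≤ converseTerm N R ℓ := by
  have hinv : 1 / N ≤ 1 := (div_le_one (by linarith)).2 hN
  have hpow : (1 - 1 / N) ^ ℓ ≤ 1 := pow_le_one₀ (by linarith) (sub_le_self _ (by positivity))
  exact mul_nonneg (by linarith) (le_max_right _ _)

theorem seven_eighths_mul_le_converseTerm (hN : 1 ≤ N) (hℓ : 4 * ((ℓ : ℝ) - 1) ≤ N) :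
    7 / 8 * (ℓ * (1 - ℓ * (R / N))) ≤ converseTerm N R ℓ := by
  have hN₀ : 0 < N := by linarith
  have hhit : 7 / 8 * (ℓ / N) ≤ 1 - (1 - 1 / N) ^ ℓ := by
    have hhalf : ((ℓ : ℝ) - 1) * (1 / N) / 2 ≤ 1 / 8 := by
      rw [mul_one_div, div_div, div_le_iff₀ (by positivity)]
      linarith
    calc 7 / 8 * (ℓ / N) = ℓ * (1 / N) * (1 - 1 / 8) := by ring
      _ ≤ ℓ * (1 / N) * (1 - (ℓ - 1) * (1 / N) / 2) := by gcongr
      _ ≤ 1 - (1 - 1 / N) ^ ℓ :=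
          mul_one_sub_half_le_one_sub_one_sub_pow (by positivity) ((div_le_one hN₀).2 hN) ℓ
  calc 7 / 8 * (ℓ * (1 - ℓ * (R / N))) = 7 / 8 * (ℓ / N) * (N - ℓ * R) := by field_simp
    _ ≤ 7 / 8 * (ℓ / N) * max (N - ℓ * R) 0 := by gcongr; exact le_max_left _ _
    _ ≤ converseTerm N R ℓ := mul_le_mul_of_nonneg_right hhit (le_max_right _ _)

end Converse

section MemorySharing

/-- The rate achieved by memory sharing, i.e. by time-sharing a scheme of rate `f` between two
cache sizes in `[0, N]`: the lower convex envelope of `f` on `[0, N]`. Being an `sInf` in `ℝ`, it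
is meaningful only when `f` is bounded below on `[0, N]` and `R ∈ [0, N]`. -/
noncomputable def memorySharingRate (N : ℝ) (f : ℝ → ℝ) (R : ℝ) : ℝ :=
  sInf {y : ℝ | ∃ θ x₁ x₂ : ℝ,
    0 ≤ θ ∧ θ ≤ 1 ∧ 0 ≤ x₁ ∧ x₁ ≤ N ∧ 0 ≤ x₂ ∧ x₂ ≤ N ∧
    θ * x₁ + (1 - θ) * x₂ = R ∧ y = θ * f x₁ + (1 - θ) * f x₂}

variable {N R x x₁ x₂ θ : ℝ} {f g : ℝ → ℝ}

theorem memorySharingRate_congr (hfg : EqOn f g (Icc 0 N)) :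
    memorySharingRate N f R = memorySharingRate N g R := by
  unfold memorySharingRate
  congr 1
  ext y
  refine exists₃_congr fun θ x₁ x₂ ↦ ?_
  constructor <;> rintro ⟨hθ₀, hθ₁, h₁, h₁N, h₂, h₂N, hR, rfl⟩ <;>
    exact ⟨hθ₀, hθ₁, h₁, h₁N, h₂, h₂N, hR, by rw [hfg ⟨h₁, h₁N⟩, hfg ⟨h₂, h₂N⟩]⟩

theorem memorySharingRate_le (hf : BddBelow (f '' Icc 0 N)) (hθ : θ ∈ Icc 0 1)
    (hx₁ : x₁ ∈ Icc 0 N) (hx₂ : x₂ ∈ Icc 0 N) :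
    memorySharingRate N f (θ * x₁ + (1 - θ) * x₂) ≤ θ * f x₁ + (1 - θ) * f x₂ := by
  obtain ⟨m, hm⟩ := hf
  refine csInf_le ⟨m, ?_⟩
    ⟨θ, x₁, x₂, hθ.1, hθ.2, hx₁.1, hx₁.2, hx₂.1, hx₂.2, rfl, rfl⟩
  rintro _ ⟨t, y₁, y₂, ht₀, ht₁, h₁, h₁N, h₂, h₂N, -, rfl⟩
  have hy₁ : m ≤ f y₁ := hm (mem_image_of_mem f ⟨h₁, h₁N⟩)
  have hy₂ : m ≤ f y₂ := hm (mem_image_of_mem f ⟨h₂, h₂N⟩)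
  linarith [mul_le_mul_of_nonneg_left hy₁ ht₀,
    mul_le_mul_of_nonneg_left hy₂ (sub_nonneg.2 ht₁)]

theorem memorySharingRate_le_self (hf : BddBelow (f '' Icc 0 N)) (hR : R ∈ Icc 0 N) :
    memorySharingRate N f R ≤ f R := by
  simpa using memorySharingRate_le hf (right_mem_Icc.2 zero_le_one) hR hR

theorem memorySharingRate_le_chord_zero (hf : BddBelow (f '' Icc 0 N)) (hx : x ∈ Ioc 0 N)
    (hR : R ∈ Icc 0 x) :
    memorySharingRate N f R ≤ R / x * f x + (1 - R / x) * f 0 := by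
  have hθ : R / x ∈ Icc 0 1 := ⟨div_nonneg hR.1 hx.1.le, (div_le_one hx.1).2 hR.2⟩
  have h := memorySharingRate_le hf hθ (Ioc_subset_Icc_self hx)
    (left_mem_Icc.2 (hx.1.le.trans hx.2))
  rwa [mul_zero, add_zero, div_mul_cancel₀ R hx.1.ne'] at h

end MemorySharing

section DecentralizedRate

/-- The worst-case update rate of the decentralized Maddah-Ali–Niesen scheme for `N` files, `L`
users and cache rate `x`. The value at `x = 0` is set separately to `min(L, N)`, since division
by zero would make the formula vanish there. -/
noncomputable def decentralizedRate (N : ℝ) (L : ℕ) (x : ℝ) : ℝ :=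
  if x = 0 then min (L : ℝ) N else (N - x) / x * (1 - (1 - x / N) ^ L)

variable {N R x : ℝ} {L : ℕ}

theorem decentralizedRate_zero : decentralizedRate N L 0 = min (L : ℝ) N := if_pos rfl

theorem decentralizedRate_of_pos (hx : 0 < x) :
    decentralizedRate N L x = (N - x) / x * (1 - (1 - x / N) ^ L) := if_neg hx.ne'

theorem decentralizedRate_nonneg (hx : x ∈ Icc 0 N) : 0 ≤ decentralizedRate N L x := by
  have hN : 0 ≤ N := hx.1.trans hx.2
  rcases hx.1.eq_or_lt with rfl | hx₀
  · rw [decentralizedRate_zero]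
    positivity
  · rw [decentralizedRate_of_pos hx₀]
    have hpow : (1 - x / N) ^ L ≤ 1 :=
      pow_le_one₀ (sub_nonneg.2 (div_le_one_of_le₀ hx.2 hN)) (sub_le_self _ (by positivity))
    exact mul_nonneg (div_nonneg (sub_nonneg.2 hx.2) hx₀.le) (sub_nonneg.2 hpow)

theorem bddBelow_decentralizedRate_image : BddBelow (decentralizedRate N L '' Icc 0 N) :=
  ⟨0, forall_mem_image.2 fun _ hx ↦ decentralizedRate_nonneg hx⟩

theorem decentralizedRate_le_div_sub_one (hx : x ∈ Ioc 0 N) :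
    decentralizedRate N L x ≤ N / x - 1 := by
  have hpow : 0 ≤ (1 - x / N) ^ L :=
    pow_nonneg (sub_nonneg.2 (div_le_one_of_le₀ hx.2 (hx.1.le.trans hx.2))) L
  calc decentralizedRate N L x = (N - x) / x * (1 - (1 - x / N) ^ L) :=
        decentralizedRate_of_pos hx.1
    _ ≤ (N - x) / x :=
        mul_le_of_le_one_right (div_nonneg (sub_nonneg.2 hx.2) hx.1.le) (sub_le_self _ hpow)
    _ = N / x - 1 := by rw [sub_div, div_self hx.1.ne']

theorem decentralizedRate_le_mul_one_sub_div (hx : x ∈ Icc 0 N) :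
    decentralizedRate N L x ≤ L * (1 - x / N) := by
  rcases hx.1.eq_or_lt with rfl | hx₀
  · simp [decentralizedRate_zero]
  · have hN : 0 < N := hx₀.trans_le hx.2
    have hbernoulli : 1 - (1 - x / N) ^ L ≤ L * (x / N) := by
      have h := one_add_mul_le_pow (a := -(x / N)) (by linarith [(div_le_one hN).2 hx.2]) L
      rw [← sub_eq_add_neg] at h
      linarith
    calc decentralizedRate N L x = (N - x) / x * (1 - (1 - x / N) ^ L) :=
          decentralizedRate_of_pos hx₀
      _ ≤ (N - x) / x * (L * (x / N)) :=
          mul_le_mul_of_nonneg_left hbernoulli (div_nonneg (sub_nonneg.2 hx.2) hx₀.le)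
      _ = L * (1 - x / N) := by field_simp

end DecentralizedRate

section Regimes

theorem exists_inv_sub_le_four_mul {M : ℕ} {r : ℝ} (hr : 1 < r * (2 * M + 1)) (hr₁ : r ≤ 1) :
    ∃ ℓ ∈ Finset.Icc 1 M, r⁻¹ - r ≤ 4 * (ℓ * (1 - ℓ * r)) := by
  have hr₀ : 0 < r := pos_of_mul_pos_left (one_pos.trans hr) (by positivity)
  set y := (r⁻¹ + 1) / 2 with hy
  have hy₀ : 0 ≤ y := by positivity
  have hyr : 2 * y * r = 1 + r := by rw [hy]; field_simp
  have hone : 1 ≤ ⌊y⌋₊ := by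
    rw [Nat.one_le_floor_iff, hy]
    linarith [(one_le_inv₀ hr₀).2 hr₁]
  have hle : ⌊y⌋₊ ≤ M := by
    rw [← Nat.lt_add_one_iff, Nat.floor_lt hy₀, hy]
    have hinv : r⁻¹ < 2 * M + 1 := (inv_lt_iff_one_lt_mul₀' hr₀).2 hr
    push_cast
    linarith
  refine ⟨⌊y⌋₊, Finset.mem_Icc.2 ⟨hone, hle⟩, ?_⟩
  set ℓ : ℝ := (⌊y⌋₊ : ℝ)
  -- `ℓ` is the integer nearest to `1 / (2r)`, and `4ℓ(1 - ℓr) = (1 - (1 - 2ℓr)²) / r`.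
  have hnear : |1 - 2 * ℓ * r| ≤ r := by
    have hupper : ℓ * r ≤ y * r := mul_le_mul_of_nonneg_right (Nat.floor_le hy₀) hr₀.le
    have hlower : y * r ≤ (ℓ + 1) * r :=
      mul_le_mul_of_nonneg_right (Nat.lt_floor_add_one y).le hr₀.le
    rw [abs_le]
    constructor <;> linarith
  calc r⁻¹ - r = (1 - r ^ 2) / r := by field_simp
    _ ≤ (1 - (1 - 2 * ℓ * r) ^ 2) / r := by
        gcongr ?_ / r
        exact sub_le_sub_left (sq_le_sq.2 (hnear.trans (le_abs_self r))) 1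
    _ = 4 * (ℓ * (1 - ℓ * r)) := by field_simp; ring

variable {N R : ℝ} {L : ℕ}

theorem memorySharingRate_le_of_few_users (hN : 0 < N) (hR₀ : 0 ≤ R)
    (hR : R / N * (2 * L + 1) ≤ 1) :
    memorySharingRate N (decentralizedRate N L) R ≤ 4 * (L * (1 - L * (R / N))) := by
  have hr : 0 ≤ R / N := by positivity
  have hrL : 0 ≤ R / N * L := by positivity
  have hRN : R ≤ N := (div_le_one hN).1 (by linarith)
  calc memorySharingRate N (decentralizedRate N L) R ≤ decentralizedRate N L R :=
        memorySharingRate_le_self bddBelow_decentralizedRate_image ⟨hR₀, hRN⟩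
    _ ≤ L * (1 - R / N) := decentralizedRate_le_mul_one_sub_div ⟨hR₀, hRN⟩
    _ ≤ L * (4 * (1 - L * (R / N))) := by gcongr; linarith
    _ = 4 * (L * (1 - L * (R / N))) := by ring

theorem memorySharingRate_le_of_few_files {M : ℝ} (hN : 0 < N) (hNM : N ≤ 4 * M)
    (hR₀ : 0 ≤ R) (hR : R / N * (2 * M + 1) ≤ 1) :
    memorySharingRate N (decentralizedRate N L) R ≤ 4 * (M * (1 - M * (R / N))) := by
  have hM : 0 ≤ M := by linarith
  set x := N / (2 * M + 1) with hx
  have hx_mem : x ∈ Ioc 0 N := ⟨by positivity, div_le_self hN.le (by linarith)⟩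
  have hRx : R / x = R / N * (2 * M + 1) := by rw [hx]; field_simp
  have hRx_le : R / x ≤ 1 := hRx.trans_le hR
  have hrate : decentralizedRate N L x ≤ 2 * M :=
    (decentralizedRate_le_div_sub_one hx_mem).trans_eq (by rw [hx]; field_simp; ring)
  have hrate_zero : decentralizedRate N L 0 ≤ 4 * M :=
    decentralizedRate_zero.trans_le ((min_le_right _ _).trans hNM)
  have hRx₀ : 0 ≤ R / x := div_nonneg hR₀ hx_mem.1.le
  calc memorySharingRate N (decentralizedRate N L) R
      ≤ R / x * decentralizedRate N L x + (1 - R / x) * decentralizedRate N L 0 :=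
        memorySharingRate_le_chord_zero bddBelow_decentralizedRate_image hx_mem
          ⟨hR₀, (div_le_one hx_mem.1).1 hRx_le⟩
    _ ≤ R / x * (2 * M) + (1 - R / x) * (4 * M) :=
        add_le_add (mul_le_mul_of_nonneg_left hrate hRx₀)
          (mul_le_mul_of_nonneg_left hrate_zero (sub_nonneg.2 hRx_le))
    _ = 4 * (M * (1 - M * (R / N))) - 2 * M * (R / N) := by rw [hRx]; ring
    _ ≤ 4 * (M * (1 - M * (R / N))) := sub_le_self _ (by positivity)

theorem exists_memorySharingRate_le_of_large_cache {M : ℕ} (hN : 0 < N) (hRN : R ≤ N)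
    (hR : 1 < R / N * (2 * M + 1)) :
    ∃ ℓ ∈ Finset.Icc 1 M,
      memorySharingRate N (decentralizedRate N L) R ≤ 4 * (ℓ * (1 - ℓ * (R / N))) := by
  have hr : 0 < R / N := pos_of_mul_pos_left (one_pos.trans hR) (by positivity)
  have hR₀ : 0 < R := (div_pos_iff_of_pos_right hN).1 hr
  have hr₁ : R / N ≤ 1 := (div_le_one hN).2 hRN
  obtain ⟨ℓ, hℓ, hle⟩ := exists_inv_sub_le_four_mul hR hr₁
  refine ⟨ℓ, hℓ, ?_⟩
  calc memorySharingRate N (decentralizedRate N L) R ≤ decentralizedRate N L R :=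
        memorySharingRate_le_self bddBelow_decentralizedRate_image ⟨hR₀.le, hRN⟩
    _ ≤ N / R - 1 := decentralizedRate_le_div_sub_one ⟨hR₀, hRN⟩
    _ ≤ (R / N)⁻¹ - R / N := by rw [inv_div]; linarith
    _ ≤ 4 * (ℓ * (1 - ℓ * (R / N))) := hle

theorem exists_memorySharingRate_le_four_mul {N : ℕ} (hN : 1 ≤ N) (hL : 1 ≤ L)
    (hR : R ∈ Icc 0 (N : ℝ)) :
    ∃ ℓ ∈ Finset.Icc 1 (min L ((N + 3) / 4)),
      memorySharingRate N (decentralizedRate N L) R ≤ 4 * (ℓ * (1 - ℓ * (R / N))) := by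
  have hN₀ : (0 : ℝ) < N := by exact_mod_cast hN
  set M := min L ((N + 3) / 4) with hM
  have hM_mem : M ∈ Finset.Icc 1 M := Finset.right_mem_Icc.2 (le_min hL (by omega))
  rcases lt_or_ge 1 (R / N * (2 * M + 1)) with hlarge | hsmall
  · exact exists_memorySharingRate_le_of_large_cache hN₀ hR.2 hlarge
  · refine ⟨M, hM_mem, ?_⟩
    rcases min_choice L ((N + 3) / 4) with hML | hMN
    · rw [hM, hML] at hsmall ⊢
      exact memorySharingRate_le_of_few_users hN₀ hR.1 hsmall
    · have hNM : N ≤ 4 * M := by omega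
      exact memorySharingRate_le_of_few_files hN₀ (by exact_mod_cast hNM) hR.1 hsmall

end Regimes

end CodedCaching

open CodedCaching

theorem stmt_6_general {N L : ℕ} (hN : 1 ≤ N) (hL : 1 ≤ L) {R : ℝ} (hR : R ∈ Icc 0 (N : ℝ)) :
    ∃ ℓ ∈ Finset.Icc 1 (min L ((N + 3) / 4)),
      memorySharingRate N (decentralizedRate N L) R ≤ 32 / 7 * converseTerm N R ℓ := by
  obtain ⟨ℓ, hℓ, hrate⟩ := exists_memorySharingRate_le_four_mul hN hL hR
  have hℓN : 4 * ℓ ≤ N + 4 := by grind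
  have hℓN' : 4 * ((ℓ : ℝ) - 1) ≤ N := by
    have : 4 * (ℓ : ℝ) ≤ N + 4 := by exact_mod_cast hℓN
    linarith
  have hconverse := seven_eighths_mul_le_converseTerm (R := R) (by exact_mod_cast hN) hℓN'
  exact ⟨ℓ, hℓ, by linarith⟩

/-- Theorem 9 (multiplicative gap of 4.7 for the static request model of
Maddah-Ali and Niesen with uniform requests): the lower convex envelope `B`
of the decentralized MN achievable rate function `h` is at most `4.7` times
the converse lower bound `max_{1 ≤ ℓ ≤ min(L,⌈N/4⌉)} (1-(1-1/N)^ℓ)(N-ℓR)⁺`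
for every cache rate `R ∈ [0,N)`.  (Note `⌈N/4⌉ = (N+3)/4` in ℕ.) -/
theorem stmt_6 (N L : ℕ) (hN : 1 ≤ N) (hL : 1 ≤ L)
    (h : ℝ → ℝ)
    (hh0 : h 0 = (min L N : ℕ))
    (hhx : ∀ x : ℝ, 0 < x → x ≤ (N : ℝ) →
      h x = (((N : ℝ) - x) / x) * (1 - (1 - x / (N : ℝ)) ^ L))
    (B : ℝ → ℝ)
    (hB : ∀ R : ℝ, B R = sInf {y : ℝ | ∃ θ x₁ x₂ : ℝ,
      0 ≤ θ ∧ θ ≤ 1 ∧ 0 ≤ x₁ ∧ x₁ ≤ (N : ℝ) ∧ 0 ≤ x₂ ∧ x₂ ≤ (N : ℝ) ∧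
      θ * x₁ + (1 - θ) * x₂ = R ∧ y = θ * h x₁ + (1 - θ) * h x₂})
    (R : ℝ) (hR0 : 0 ≤ R) (hRN : R < (N : ℝ)) :
    B R ≤ 4.7 * (Finset.Icc 1 (min L ((N + 3) / 4))).sup'
        (Finset.nonempty_Icc.2 (le_min hL (by omega)))
        (fun ℓ : ℕ => (1 - (1 - 1 / (N : ℝ)) ^ ℓ) * max ((N : ℝ) - ℓ * R) 0) := by
  have hrate : EqOn h (decentralizedRate N L) (Icc 0 N) := by
    rintro x ⟨hx₀, hxN⟩
    rcases hx₀.eq_or_lt with rfl | hx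
    · rw [hh0, decentralizedRate_zero, Nat.cast_min]
    · rw [hhx x hx hxN, decentralizedRate_of_pos hx]
  obtain ⟨ℓ, hℓ, hle⟩ := stmt_6_general hN hL ⟨hR0, hRN.le⟩
  calc B R = memorySharingRate N (decentralizedRate N L) R :=
        (hB R).trans (memorySharingRate_congr hrate)
    _ ≤ 32 / 7 * converseTerm N R ℓ := hle
    _ ≤ 4.7 * converseTerm N R ℓ :=
        mul_le_mul_of_nonneg_right (by norm_num) (converseTerm_nonneg (by exact_mod_cast hN))
    _ ≤ _ := mul_le_mul_of_nonneg_left (Finset.le_sup' (converseTerm N R) hℓ) (by norm_num)
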